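/- Let J ≥ 2, L ≥ 1, r ≥ 1 and let H be the Type-I quasi-cyclic parity-check matrix associated to any exponent matrix c : Fin J → Fin L → ZMod r. Then it is impossible that both H * Hᵀ = 0 (H is dual-containing) and H contains no 4-cycle. In other words, there is no dual-containing Type-I QC-LDPC code with girth at least 6. -/

import Mathlib

/-!
Each block of `H` is a permutation matrix, so one row can be chosen in each of two different
block rows such that both contain a `1` in the column `(0, 0)`. The relation `H Hᵀ = 0` over
`ZMod 2` makes two such rows overlap in an even number of columns, hence in a second one, and
the two rows with these two columns form a 4-cycle.
-/

open Matrix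

/-- The Type-I quasi-cyclic parity-check matrix associated with an exponent matrix
`c : Fin J → Fin L → ZMod r`: the `(j,l)` block is the circulant permutation matrix
with `1`s at positions `(a,b)` with `a − b = c j l`. -/
def typeIH (r J L : ℕ) (c : Fin J → Fin L → ZMod r) :
    Matrix (Fin J × ZMod r) (Fin L × ZMod r) (ZMod 2) :=
  Matrix.of fun p q => if p.2 - q.2 = c p.1 q.1 then 1 else 0

/-- A 4-cycle in a binary matrix: two distinct rows and two distinct columns whose four
intersections all hold a `1`. -/
def HasFourCycle {R C : Type*} (H : Matrix R C (ZMod 2)) : Prop :=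
  ∃ (ρ ρ' : R) (γ γ' : C), ρ ≠ ρ' ∧ γ ≠ γ' ∧
    H ρ γ = 1 ∧ H ρ γ' = 1 ∧ H ρ' γ = 1 ∧ H ρ' γ' = 1

/-- There is no dual-containing Type-I QC-LDPC code with girth at least 6: for `J ≥ 2`,
no Type-I quasi-cyclic parity-check matrix can satisfy `H Hᵀ = 0` and be free of
4-cycles at the same time. -/
theorem typeI_no_dual_containing_girth_six (r J L : ℕ) [NeZero r]
    (hJ : 2 ≤ J) (hL : 1 ≤ L) (c : Fin J → Fin L → ZMod r) :
    ¬ (typeIH r J L c * (typeIH r J L c)ᵀ = 0 ∧ ¬ HasFourCycle (typeIH r J L c)) := by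
  rintro ⟨hdual, hcycle⟩
  -- Every block is a permutation matrix, so these two rows of different block rows
  -- both have a `1` in the column `(0, 0)`.
  let ρ : Fin J × ZMod r := (⟨0, by omega⟩, c ⟨0, by omega⟩ ⟨0, hL⟩)
  let σ : Fin J × ZMod r := (⟨1, hJ⟩, c ⟨1, hJ⟩ ⟨0, hL⟩)
  let γ : Fin L × ZMod r := (⟨0, hL⟩, 0)
  have hne : ρ ≠ σ := by simp [ρ, σ]
  have h1 : typeIH r J L c ρ γ = 1 := by simp [typeIH, ρ, γ]
  have h2 : typeIH r J L c σ γ = 1 := by simp [typeIH, σ, γ]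
  have hbin : ∀ x : ZMod 2, x ≠ 0 → x = 1 := by decide
  have hsum := congrFun (congrFun hdual ρ) σ
  -- Without a 4-cycle the rows share no other column, so their inner product is `1`.
  rw [Matrix.mul_apply, Finset.sum_eq_single γ] at hsum
  · simp [h1, h2] at hsum
  · intro δ _ hγ
    by_contra h
    rw [Matrix.transpose_apply] at h
    exact hcycle ⟨ρ, σ, γ, δ, hne, hγ.symm, h1, hbin _ (left_ne_zero_of_mul h),
      h2, hbin _ (right_ne_zero_of_mul h)⟩
  · intro h
    exact absurd (Finset.mem_univ γ) h
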